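/- Hook case of the Jacobi–Trudy formula: for integers u ≥ 0 and v ≥ 0 with v + 1 ≤ n, the generalized Schur polynomial of the hook partition satisfies S_{(u|v)} := S_{(u+1,1^v)}(x_1,…,x_n|a,b) = det M, where M is the (v+1)×(v+1) matrix whose first row is (h^{(0)}_{u+1}, h^{(1)}_{u+1}, …, h^{(v)}_{u+1}) and whose i-th row, for 2 ≤ i ≤ v+1, is (h^{(0)}_{2−i}, h^{(1)}_{2−i}, …, h^{(v)}_{2−i}). -/

import Mathlib

open Polynomial Matrix Finset

noncomputable section

variable {K L : Type*} [Field K] [Field L]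

/-- The orthogonal-polynomial sequence: `φ₀ = 1`, `φ₁ = z - a 0`,
`φ_{i+1} = (z - a i)·φ_i - b i·φ_{i-1}` (so `φ_{-1} = 0`). -/
def phi (a b : ℤ → K) : ℕ → Polynomial K
  | 0 => 1
  | 1 => Polynomial.X - Polynomial.C (a 0)
  | (i+2) => (Polynomial.X - Polynomial.C (a (i+1))) * phi a b (i+1)
      - Polynomial.C (b (i+1)) * phi a b i

/-- `φ` with integer index, `0` for negative index. -/
def phiZ (a b : ℤ → K) (m : ℤ) : Polynomial K :=
  if m < 0 then 0 else phi a b m.toNat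

/-- Generalized Schur polynomial `S_λ(y₁,…,y_m|a,b)
  = det(φ_{λ_j+m-j}(y_i)) / ∏_{i<j}(y_i - y_j)` (indices here 0-based). -/
def genS (a b : ℤ → K) (c : K →+* L) {m : ℕ} (y : Fin m → L) (lam : Fin m → ℕ) : L :=
  Matrix.det (Matrix.of fun i j : Fin m =>
      (phi a b (lam j + (m - 1 - (j : ℕ)))).eval₂ c (y i)) /
    ∏ i : Fin m, ∏ j ∈ Finset.Ioi i, (y i - y j)

/-- `h_i = S_{(i)}` for `i ≥ 0`, and `h_i = 0` for `i < 0`. -/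
def genh (a b : ℤ → K) (c : K →+* L) {m : ℕ} (y : Fin m → L) (i : ℤ) : L :=
  if i < 0 then 0 else genS a b c y (fun j => if (j : ℕ) = 0 then i.toNat else 0)

/-- `h_i^{(0)} = h_i`, `h_i^{(r+1)} = h_{i+1}^{(r)} + a(i+m-1)h_i^{(r)} + b(i+m-1)h_{i-1}^{(r)}`. -/
def genhr (a b : ℤ → K) (c : K →+* L) {m : ℕ} (y : Fin m → L) : ℕ → ℤ → L
  | 0, i => genh a b c y i
  | (r+1), i => genhr a b c y r (i+1) + c (a (i + m - 1)) * genhr a b c y r i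
      + c (b (i + m - 1)) * genhr a b c y r (i-1)

/-- The field `F = K(x₁,…,x_n)`. -/
abbrev Fn (K : Type*) [Field K] (n : ℕ) := FractionRing (MvPolynomial (Fin n) K)

/-- The embedding `K → K(x₁,…,x_n)`. -/
def cK (K : Type*) [Field K] (n : ℕ) : K →+* Fn K n :=
  (algebraMap (MvPolynomial (Fin n) K) (Fn K n)).comp MvPolynomial.C

/-- The variables `x₁,…,x_n` as elements of `K(x₁,…,x_n)`. -/
def xv (K : Type*) [Field K] (n : ℕ) (i : Fin n) : Fn K n :=
  algebraMap (MvPolynomial (Fin n) K) (Fn K n) (MvPolynomial.X i)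

/-- The generalized Schur polynomial of the hook partition `(u+1, 1^v)`. -/
def genHook (a b : ℤ → K) (c : K →+* L) {m : ℕ} (y : Fin m → L) (u v : ℕ) : L :=
  genS a b c y (fun j : Fin m => if (j : ℕ) = 0 then u + 1 else if (j : ℕ) ≤ v then 1 else 0)

/-! The divided difference `ℓ(p) = p[y₁, …, y_n]` is the coefficient of `z ^ (n - 1)` as long as
`deg p < n`, so it vanishes in degree below `n - 1` and is `1` on monic polynomials of degree
`n - 1`. Multiplying the values `p_i(y_k)` by the weighted powers of the nodes turns a bialternant
into the determinant of the `ℓ(p_i z ^ j)`. For `p_i = φ_{λ_i + n - 1 - i}` with `λ_i = 0` the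
`i`-th row of the latter is upper unitriangular, so only the leading block indexed by the nonzero
parts of `λ` matters. One row gives `h_i = ℓ(φ_{i + n - 1})`, and multiplication by `z` acts on the
`φ_m` by the three-term recurrence defining `h_i^{(r)}`, whence
`h_i^{(r)} = ℓ(z ^ r φ_{i + n - 1})` for `r < n`. -/

section Determinant

variable {R : Type*} [CommRing R]

lemma det_pow_rev {n : ℕ} (y : Fin n → R) :
    (of fun i j : Fin n => y i ^ (j.rev : ℕ)).det = ∏ i, ∏ j ∈ Ioi i, (y i - y j) := by
  have hproj : (of fun i j : Fin n => y i ^ (j.rev : ℕ)) = projVandermonde (fun _ => 1) y := by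
    ext i j
    simp [projVandermonde_apply]
  rw [hproj, det_projVandermonde]
  simp

lemma det_eq_one_of_upper_unitriangular {m : Type*} [Fintype m] [LinearOrder m]
    (M : Matrix m m R) (hM : ∀ i j, j ≤ i → M i j = if i = j then 1 else 0) : M.det = 1 := by
  have hupper : M.IsUpperTriangular := fun i j (hji : j < i) => by
    rw [hM i j hji.le, if_neg hji.ne']
  rw [det_of_isUpperTriangular hupper]
  exact prod_eq_one fun i _ => by rw [hM i i le_rfl, if_pos rfl]

lemma det_eq_det_leading_block {n k : ℕ} (hk : k ≤ n) (M : Matrix (Fin n) (Fin n) R)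
    (hM : ∀ i j : Fin n, k ≤ (i : ℕ) → j ≤ i → M i j = if i = j then 1 else 0) :
    M.det = (M.submatrix (Fin.castLE hk) (Fin.castLE hk)).det := by
  have hlower : (toSquareBlockProp M fun i => ¬ (i : ℕ) < k).det = 1 :=
    det_eq_one_of_upper_unitriangular _ fun i j hji =>
      (hM i j (not_lt.1 i.2) hji).trans (if_congr Subtype.ext_iff.symm rfl rfl)
  rw [M.twoBlockTriangular_det (fun i => (i : ℕ) < k), hlower, mul_one,
    ← det_submatrix_equiv_self (Fin.castLEquiv hk)]
  · rfl
  · intro i hi j hj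
    have hji : j < i := hj.trans_le (not_lt.1 hi)
    rw [hM i j (not_lt.1 hi) hji.le, if_neg hji.ne']

end Determinant

section DividedDifference

variable {ι : Type*} [Fintype ι] [DecidableEq ι]

/-- The divided difference `p ↦ p[y_i : i ∈ ι]` at the nodes `y`, as a linear functional on
polynomials, written as a sum over the nodes with Lagrange's barycentric weights. -/
def dividedDifference (y : ι → L) : L[X] →ₗ[L] L :=
  ∑ i, Lagrange.nodalWeight univ y i • leval (y i)

lemma dividedDifference_apply (y : ι → L) (p : L[X]) :
    dividedDifference y p = ∑ i, Lagrange.nodalWeight univ y i * p.eval (y i) := by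
  simp [dividedDifference]

variable {y : ι → L} {p : L[X]}

lemma dividedDifference_eq_coeff (hy : Function.Injective y) (hp : p.degree < Fintype.card ι) :
    dividedDifference y p = p.coeff (Fintype.card ι - 1) := by
  rw [dividedDifference_apply, ← card_univ, Lagrange.coeff_eq_sum hy.injOn hp]
  refine sum_congr rfl fun i _ => ?_
  rw [Lagrange.nodalWeight, prod_inv_distrib, mul_comm, div_eq_mul_inv]

lemma dividedDifference_eq_zero (hy : Function.Injective y)
    (hp : p.natDegree + 1 < Fintype.card ι) : dividedDifference y p = 0 := by
  have hdeg : p.degree < Fintype.card ι :=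
    degree_le_natDegree.trans_lt (by exact_mod_cast (Nat.lt_succ_self _).trans hp)
  rw [dividedDifference_eq_coeff hy hdeg, coeff_eq_zero_of_natDegree_lt (by lia)]

lemma dividedDifference_eq_one (hy : Function.Injective y) {k : ℕ} (hp : IsMonicOfDegree p k)
    (hk : k + 1 = Fintype.card ι) : dividedDifference y p = 1 := by
  have hdeg : p.degree < Fintype.card ι :=
    degree_le_natDegree.trans_lt (by rw [hp.natDegree_eq, ← hk]; exact_mod_cast k.lt_succ_self)
  rw [dividedDifference_eq_coeff hy hdeg, ← hk, Nat.add_sub_cancel, ← hp.natDegree_eq]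
  exact hp.monic

end DividedDifference

section Bialternant

variable {n : ℕ} {y : Fin n → L}

lemma dividedDifference_mul_X_pow (hy : Function.Injective y) {p : L[X]} {i j : Fin n}
    (hp : IsMonicOfDegree p i.rev) (hji : j ≤ i) :
    dividedDifference y (p * X ^ (j : ℕ)) = if i = j then 1 else 0 := by
  have hmonic := hp.mul (isMonicOfDegree_X_pow L (j : ℕ))
  rw [Fin.val_rev] at hmonic
  split_ifs with hij
  · exact dividedDifference_eq_one hy hmonic (by rw [Fintype.card_fin, hij]; lia)
  · have : (j : ℕ) < i := hji.lt_of_ne' hij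
    exact dividedDifference_eq_zero hy (by rw [hmonic.natDegree_eq, Fintype.card_fin]; lia)

theorem det_eval_div_eq_det_dividedDifference (hy : Function.Injective y) (p : Fin n → L[X]) :
    (of fun i j : Fin n => (p j).eval (y i)).det / ∏ i, ∏ j ∈ Ioi i, (y i - y j) =
      (of fun i j : Fin n => dividedDifference y (p i * X ^ (j : ℕ))).det := by
  set W : Matrix (Fin n) (Fin n) L :=
    of fun i j => Lagrange.nodalWeight univ y i * y i ^ (j : ℕ) with hW
  have hmul (q : Fin n → L[X]) :
      (of fun i j : Fin n => (q j).eval (y i)).det * W.det =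
        (of fun i j : Fin n => dividedDifference y (q i * X ^ (j : ℕ))).det := by
    rw [← det_transpose, ← det_mul]
    congr 1
    ext i j
    simp [hW, mul_apply, dividedDifference_apply, mul_left_comm]
  have hunit : W.det * ∏ i, ∏ j ∈ Ioi i, (y i - y j) = 1 := by
    have hdet := hmul fun i => X ^ (i.rev : ℕ)
    simp only [eval_pow, eval_X] at hdet
    rw [mul_comm, ← det_pow_rev, hdet]
    exact det_eq_one_of_upper_unitriangular _ fun i j hji =>
      dividedDifference_mul_X_pow hy (isMonicOfDegree_X_pow L _) hji
  rw [← hmul, div_eq_iff (right_ne_zero_of_mul_eq_one hunit), mul_assoc, hunit, mul_one]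

end Bialternant

section Phi

lemma isMonicOfDegree_map {R S : Type*} [Semiring R] [Semiring S] [Nontrivial S] (f : R →+* S)
    {p : R[X]} {k : ℕ} (hp : IsMonicOfDegree p k) : IsMonicOfDegree (p.map f) k :=
  ⟨(hp.monic.natDegree_map f).trans hp.natDegree_eq, hp.monic.map f⟩

variable (a b : ℤ → K)

lemma isMonicOfDegree_phi : ∀ k, IsMonicOfDegree (phi a b k) k
  | 0 => isMonicOfDegree_zero_iff.2 rfl
  | 1 => isMonicOfDegree_X_sub_one _
  | k + 2 => by
    have hlead := (isMonicOfDegree_X_sub_one (a (k + 1))).mul (isMonicOfDegree_phi (k + 1))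
    rw [add_comm 1] at hlead
    refine hlead.sub ((natDegree_C_mul_le _ _).trans_lt ?_)
    rw [(isMonicOfDegree_phi k).natDegree_eq]
    lia

lemma phiZ_natCast (k : ℕ) : phiZ a b k = phi a b k := by
  simp [phiZ]

lemma phiZ_of_neg {m : ℤ} (hm : m < 0) : phiZ a b m = 0 :=
  if_pos hm

lemma phiZ_mul_X {m : ℤ} (hm : m ≠ -1) :
    phiZ a b m * X = phiZ a b (m + 1) + C (a m) * phiZ a b m + C (b m) * phiZ a b (m - 1) := by
  obtain hneg | hpos := lt_or_ge m 0
  · simp [phiZ_of_neg a b hneg, phiZ_of_neg a b (show m + 1 < 0 by lia),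
      phiZ_of_neg a b (show m - 1 < 0 by lia)]
  lift m to ℕ using hpos
  cases m with
  | zero => simp [phiZ, phi]
  | succ k =>
    rw [show ((k + 1 : ℕ) : ℤ) + 1 = (k + 2 : ℕ) by push_cast; ring,
      show ((k + 1 : ℕ) : ℤ) - 1 = k by push_cast; ring]
    simp only [phiZ_natCast, phi]
    push_cast
    ring

end Phi

section JacobiTrudy

variable (a b : ℤ → K) (c : K →+* L) {n : ℕ} {y : Fin n → L}

theorem genS_eq_det_dividedDifference (hy : Function.Injective y) {k : ℕ} (hk : k ≤ n)
    (lam : Fin n → ℕ) (hlam : ∀ i : Fin n, k ≤ (i : ℕ) → lam i = 0) :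
    genS a b c y lam = (of fun i j : Fin k => dividedDifference y
      ((phiZ a b ((lam (Fin.castLE hk i) : ℤ) - i + n - 1)).map c * X ^ (j : ℕ))).det := by
  have hdet := det_eval_div_eq_det_dividedDifference hy
    fun j => (phi a b (lam j + (n - 1 - (j : ℕ)))).map c
  simp only [eval_map] at hdet
  rw [genS, hdet, det_eq_det_leading_block hk]
  · congr 1
    ext i j
    have hidx : (lam (Fin.castLE hk i) : ℤ) - i + n - 1 =
        (lam (Fin.castLE hk i) + (n - 1 - i) : ℕ) := by
      have hi := i.2.trans_le hk
      lia
    rw [of_apply, hidx, phiZ_natCast]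
    rfl
  · intro i j hi hji
    have hrev : n - 1 - (i : ℕ) = i.rev := by rw [Fin.val_rev]; lia
    rw [of_apply, hlam i hi, zero_add, hrev]
    exact dividedDifference_mul_X_pow hy (isMonicOfDegree_map c (isMonicOfDegree_phi a b _)) hji

lemma genh_eq_dividedDifference (hy : Function.Injective y) (hn : 0 < n) (i : ℤ) :
    genh a b c y i = dividedDifference y ((phiZ a b (i + n - 1)).map c) := by
  rw [genh]
  split_ifs with hi
  · obtain hneg | hpos := lt_or_ge (i + n - 1) 0
    · simp [phiZ_of_neg a b hneg]
    · lift i + n - 1 to ℕ using hpos with m hm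
      rw [phiZ_natCast, dividedDifference_eq_zero hy]
      rw [natDegree_map, (isMonicOfDegree_phi a b m).natDegree_eq, Fintype.card_fin]
      lia
  · rw [genS_eq_det_dividedDifference a b c hy (show 1 ≤ n from hn) _
      fun j hj => if_neg (by lia), det_unique]
    simp [Int.toNat_of_nonneg (not_lt.1 hi)]

theorem genhr_eq_dividedDifference (hy : Function.Injective y) {r : ℕ} (hr : r < n) (i : ℤ) :
    genhr a b c y r i = dividedDifference y ((phiZ a b (i + n - 1)).map c * X ^ r) := by
  induction r generalizing i with
  | zero => simpa [genhr] using genh_eq_dividedDifference a b c hy hr i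
  | succ r ih =>
    have ih := ih (r.lt_succ_self.trans hr)
    rw [genhr, ih, ih, ih, show i + 1 + n - 1 = i + n - 1 + 1 by ring,
      show i - 1 + n - 1 = i + n - 1 - 1 by ring]
    generalize i + n - 1 = m
    obtain rfl | hm := eq_or_ne m (-1)
    · -- The recurrence for `φ` breaks down here, but its excess term `ℓ(z ^ r φ_0)` vanishes.
      have hpow : dividedDifference y (X ^ r) = 0 :=
        dividedDifference_eq_zero hy (by rwa [natDegree_X_pow, Fintype.card_fin])
      simp [phiZ, phi, hpow]
    · rw [pow_succ', ← mul_assoc, ← map_X c, ← Polynomial.map_mul, phiZ_mul_X a b hm]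
      simp [add_mul, ← smul_eq_C_mul]

theorem hook_jacobi_trudy_general (hy : Function.Injective y) {k : ℕ} (hk : k ≤ n)
    (lam : Fin n → ℕ) (hlam : ∀ i : Fin n, k ≤ (i : ℕ) → lam i = 0) :
    genS a b c y lam =
      (of fun i j : Fin k => genhr a b c y j ((lam (Fin.castLE hk i) : ℤ) - i)).det := by
  rw [genS_eq_det_dividedDifference a b c hy hk lam hlam]
  congr 1
  ext i j
  rw [of_apply, of_apply, genhr_eq_dividedDifference a b c hy (j.2.trans_le hk)]

end JacobiTrudy

lemma xv_injective (K : Type*) [Field K] (n : ℕ) : Function.Injective (xv K n) :=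
  (IsFractionRing.injective (MvPolynomial (Fin n) K) (Fn K n)).comp MvPolynomial.X_injective

/-- **Hook case of the Jacobi–Trudy formula.** For `u, v ≥ 0` with `v + 1 ≤ n`,
`S_{(u|v)} = S_{(u+1,1^v)}(x|a,b)` equals the determinant of the `(v+1)×(v+1)` matrix
with first row `(h^{(0)}_{u+1},…,h^{(v)}_{u+1})` and `i`-th row `(h^{(0)}_{2-i},…,h^{(v)}_{2-i})`
for `2 ≤ i ≤ v+1`. -/
theorem hook_jacobi_trudy (K : Type*) [Field K] (a b : ℤ → K) (n : ℕ) (hn : 1 ≤ n)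
    (u v : ℕ) (hv : v + 1 ≤ n) :
    genHook a b (cK K n) (xv K n) u v =
      Matrix.det (Matrix.of fun i j : Fin (v + 1) =>
        genhr a b (cK K n) (xv K n) (j : ℕ)
          (if (i : ℕ) = 0 then (u : ℤ) + 1 else 1 - (i : ℕ))) := by
  rw [genHook, hook_jacobi_trudy_general a b _ (xv_injective K n) hv _ fun i hi => by grind]
  congr! 4 with i j
  grind [Fin.val_castLE]
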